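/- Let X be a real random variable taking strictly positive values, let s > 2 be an integer, and for 0 ≤ i ≤ s set p_i = Pr(D_i > D_{s−i}), where D_i and D_{s−i} are independent random variables distributed respectively like i⊙X and (s−i)⊙X. Then for all strictly positive integers i, j with i + j ≤ s, one has p_i + p_j = p_{i+j}. -/

import Mathlib

open MeasureTheory ProbabilityTheory
open scoped ENNReal

/-- The unit vector in the plane with direction angle `θ`. -/
noncomputable def stepVec (θ : ℝ) : EuclideanSpace ℝ (Fin 2) :=
  (WithLp.equiv 2 (Fin 2 → ℝ)).symm ![Real.cos θ, Real.sin θ]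

/-- The uniform probability distribution on the unit circle of the plane. -/
noncomputable def uniformCircle : Measure (EuclideanSpace ℝ (Fin 2)) :=
  Measure.map stepVec
    ((ENNReal.ofReal (2 * Real.pi))⁻¹ • volume.restrict (Set.Ioc 0 (2 * Real.pi)))

/-- The distribution of `n ⊙ X`: the distance from the origin after `n` independent
steps whose lengths are i.i.d. with law `μ` and whose directions are i.i.d. uniform
on the unit circle, all independent. -/
noncomputable def walkDist (μ : Measure ℝ) (n : ℕ) : Measure ℝ :=
  Measure.map
    (fun p : (Fin n → ℝ) × (Fin n → EuclideanSpace ℝ (Fin 2)) => ‖∑ i, p.1 i • p.2 i‖)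
    ((Measure.pi fun _ => μ).prod (Measure.pi fun _ => uniformCircle))


section Aux

open Real

lemma aux_arccos_sum {a b c : ℝ} (ha : 0 < a) (hb : 0 < b) (hc : 0 < c) :
    arccos ((b^2+c^2-a^2)/(2*b*c)) + arccos ((c^2+a^2-b^2)/(2*c*a))
      + arccos ((a^2+b^2-c^2)/(2*a*b)) = π := by
  have key : ∀ x y z : ℝ, 0 < x → 0 < y → 0 < z → y + z ≤ x →
      arccos ((y^2+z^2-x^2)/(2*y*z)) = π ∧ arccos ((z^2+x^2-y^2)/(2*z*x)) = 0 ∧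
      arccos ((x^2+y^2-z^2)/(2*x*y)) = 0 := by
    intro x y z hx hy hz h
    refine ⟨arccos_of_le_neg_one ?_, arccos_of_one_le ?_, arccos_of_one_le ?_⟩
    · rw [div_le_iff₀ (by positivity)]; nlinarith
    · rw [le_div_iff₀ (by positivity)]; nlinarith
    · rw [le_div_iff₀ (by positivity)]; nlinarith
  rcases le_total (b + c) a with h | h1
  · obtain ⟨h1, h2, h3⟩ := key a b c ha hb hc h
    rw [h1, h2, h3]; ring
  rcases le_total (c + a) b with h | h2
  · obtain ⟨h1, h2, h3⟩ := key b c a hb hc ha h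
    rw [h1, h2, h3]; ring
  rcases le_total (a + b) c with h | h3
  · obtain ⟨h1, h2, h3⟩ := key c a b hc ha hb h
    rw [h1, h2, h3]; ring
  have bd : ∀ x y z : ℝ, 0 < y → 0 < z → x ≤ y + z → y ≤ z + x → z ≤ x + y → 
      -1 ≤ (y^2+z^2-x^2)/(2*y*z) ∧ (y^2+z^2-x^2)/(2*y*z) ≤ 1 := by
    intro x y z hy hz h1 h2 h3
    constructor
    · rw [le_div_iff₀ (by positivity)]; nlinarith
    · rw [div_le_iff₀ (by positivity)]; nlinarith
  obtain ⟨u1, u2⟩ := bd a b c hb hc h1 h2 h3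
  obtain ⟨v1, v2⟩ := bd b c a hc ha h2 h3 h1
  have hle : arccos ((b^2+c^2-a^2)/(2*b*c)) + arccos ((c^2+a^2-b^2)/(2*c*a)) ≤ π := by
    have : arccos ((b^2+c^2-a^2)/(2*b*c)) ≤ arccos (-((c^2+a^2-b^2)/(2*c*a))) := by
      apply antitone_arccos
      rw [← sub_nonneg]
      have : (b^2+c^2-a^2)/(2*b*c) - -((c^2+a^2-b^2)/(2*c*a))
        = (a+b) * ((c+a-b)*(c+b-a)) / (2*a*b*c) := by field_simp; ring
      rw [this]
      have := mul_nonneg (by linarith : 0 ≤ c+a-b) (by linarith : 0 ≤ c+b-a)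
      positivity
    rw [arccos_neg] at this; linarith
  have hcos : cos (arccos ((b^2+c^2-a^2)/(2*b*c)) + arccos ((c^2+a^2-b^2)/(2*c*a)))
      = -((a^2+b^2-c^2)/(2*a*b)) := by
    rw [cos_add, cos_arccos u1 u2, cos_arccos v1 v2, sin_arccos, sin_arccos]
    have e1 : 1 - ((b^2+c^2-a^2)/(2*b*c))^2 = 
      ((a+b+c)*(b+c-a)*(c+a-b)*(a+b-c)) / (2*b*c)^2 := by field_simp; ring
    have e2 : 1 - ((c^2+a^2-b^2)/(2*c*a))^2 = 
      ((a+b+c)*(b+c-a)*(c+a-b)*(a+b-c)) / (2*c*a)^2 := by field_simp; ring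
    have hS : 0 ≤ (a+b+c)*(b+c-a)*(c+a-b)*(a+b-c) := by
      have := (by linarith : 0 ≤ b+c-a)
      have := (by linarith : 0 ≤ c+a-b)
      have := (by linarith : 0 ≤ a+b-c)
      positivity
    rw [e1, e2, sqrt_div hS, sqrt_div hS, sqrt_sq (by positivity), sqrt_sq (by positivity),
      div_mul_div_comm _ _ (√_), mul_self_sqrt hS]
    field_simp; ring
  have := arccos_cos (add_nonneg (arccos_nonneg _) (arccos_nonneg _)) hle
  rw [hcos, arccos_neg] at this
  linarith

/-- angle law -/
noncomputable def angLaw : Measure ℝ :=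
  (ENNReal.ofReal (2 * π))⁻¹ • volume.restrict (Set.Ioc 0 (2 * π))

lemma two_pi_ne : ENNReal.ofReal (2 * π) ≠ 0 := by
  have := Real.pi_pos
  simpa using this

instance : IsProbabilityMeasure angLaw := ⟨by
  simp [angLaw]
  rw [ENNReal.inv_mul_cancel]
  · simpa using two_pi_ne
  · finiteness⟩

lemma aux_iff {t θ : ℝ} (h0 : 0 < θ) (h1 : θ ≤ π) : cos θ < t ↔ arccos t < θ := by
  have hθ := arccos_cos h0.le h1
  constructor
  · intro h
    rcases le_or_gt 1 t with ht | ht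
    · rwa [arccos_of_one_le ht]
    · have := strictAntiOn_arccos ⟨neg_one_le_cos θ, cos_le_one θ⟩
        ⟨(neg_one_le_cos θ).trans h.le, ht.le⟩ h
      rwa [hθ] at this
  · intro h
    by_contra! h'
    have := antitone_arccos h'
    linarith

lemma angLaw_lt (t : ℝ) : angLaw {θ | cos θ < t} = ENNReal.ofReal (arccos (-t) / π) := by
  have hpi := Real.pi_pos
  have hm : MeasurableSet {θ : ℝ | cos θ < t} :=
    measurableSet_lt (by fun_prop) (by fun_prop)
  have e : volume ({θ : ℝ | cos θ < t} ∩ Set.Ioc 0 (2*π)) =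
      volume (Set.Ioo (arccos t) (2*π - arccos t)) := by
    apply measure_congr
    have hae : ∀ᵐ x : ℝ, x ≠ 2*π := by simp [ae_iff]
    filter_upwards [hae] with x hx
    apply propext
    change (cos x < t ∧ 0 < x ∧ x ≤ 2*π) ↔ (arccos t < x ∧ x < 2*π - arccos t)
    have hn := arccos_nonneg t
    have hp := arccos_le_pi t
    constructor
    · rintro ⟨h, h0, h1⟩
      have h1 := lt_of_le_of_ne h1 hx
      rcases le_total x π with h2 | h2
      · have := (aux_iff h0 h2).1 h
        exact ⟨this, by linarith⟩
      · rw [← cos_two_pi_sub] at h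
        have := (aux_iff (by linarith) (by linarith)).1 h
        exact ⟨by linarith, by linarith⟩
    · rintro ⟨h, h1⟩
      refine ⟨?_, by linarith, by linarith⟩
      rcases le_total x π with h2 | h2
      · exact (aux_iff (by linarith) h2).2 h
      · rw [← cos_two_pi_sub]
        exact (aux_iff (by linarith) (by linarith)).2 (by linarith)
  rw [angLaw, Measure.smul_apply, Measure.restrict_apply hm, e, Real.volume_Ioo, smul_eq_mul,
    ← ENNReal.ofReal_inv_of_pos (by positivity), ← ENNReal.ofReal_mul (by positivity), arccos_neg]
  congr 1
  field_simp; ring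

lemma angLaw_eq (t : ℝ) : angLaw {θ | cos θ = t} = 0 := by
  have hm : MeasurableSet {θ : ℝ | cos θ = t} :=
    measurableSet_eq_fun (by fun_prop) (by fun_prop)
  rw [angLaw, Measure.smul_apply, Measure.restrict_apply hm, smul_eq_mul]
  have : volume ({θ : ℝ | cos θ = t} ∩ Set.Ioc 0 (2*π)) = 0 := by
    refine measure_mono_null (t := {arccos t, 2*π - arccos t}) ?_ ?_
    · rintro x ⟨h, h0, h1⟩
      have h : cos x = t := h
      rcases le_total x π with h2 | h2
      · left; rw [← h, arccos_cos h0.le h2]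
      · right; rw [← h, ← cos_two_pi_sub, arccos_cos (by linarith) (by linarith)]; simp
    · exact (Set.toFinite _).measure_zero _
  rw [this, mul_zero]

lemma angLaw_shift (f : ℝ → ℝ≥0∞) (hf : Function.Periodic f (2*π)) (a : ℝ) :
    ∫⁻ θ, f (θ + a) ∂angLaw = ∫⁻ θ, f θ ∂angLaw := by
  have hpi := Real.two_pi_pos
  rw [angLaw, lintegral_smul_measure, lintegral_smul_measure]
  congr 1
  have h1 := (isAddFundamentalDomain_Ioc hpi 0 volume).setLIntegral_eq
    (isAddFundamentalDomain_Ioc hpi a volume) f (fun g x => hf.map_vadd_zmultiples g x)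
  rw [zero_add] at h1
  rw [h1]
  have := (measurePreserving_add_right volume a).setLIntegral_comp_preimage_emb
    (measurableEmbedding_addRight a) f (Set.Ioc a (a + 2*π))
  rw [← this]
  congr 2
  simp [add_sub_cancel_left]

abbrev E2 := EuclideanSpace ℝ (Fin 2)

noncomputable def rot (φ : ℝ) : E2 →+ E2 where
  toFun x := !₂[cos φ * x 0 - sin φ * x 1, sin φ * x 0 + cos φ * x 1]
  map_zero' := by ext i; fin_cases i <;> simp
  map_add' x y := by ext i; fin_cases i <;> simp <;> ring

lemma rot_apply (φ : ℝ) (x : E2) :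
    rot φ x = !₂[cos φ * x 0 - sin φ * x 1, sin φ * x 0 + cos φ * x 1] := rfl

lemma rot_smul (φ r : ℝ) (x : E2) : rot φ (r • x) = r • rot φ x := by
  ext i; fin_cases i <;> simp [rot_apply] <;> ring

lemma rot_stepVec (φ θ : ℝ) : rot φ (stepVec θ) = stepVec (θ + φ) := by
  ext i; fin_cases i <;> simp [rot_apply, stepVec, cos_add, sin_add] <;> ring

lemma rot_meas2 : Measurable (fun q : ℝ × E2 => rot q.1 q.2) := by
  simp only [rot_apply]
  apply Continuous.measurable
  fun_prop

lemma rot_meas (φ : ℝ) : Measurable (rot φ) := by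
  change Measurable (fun x => rot φ x)
  simp only [rot_apply]
  apply Continuous.measurable
  fun_prop

lemma stepVec_meas : Measurable stepVec := by
  unfold stepVec
  apply Continuous.measurable
  simp only [WithLp.equiv_symm_apply]
  refine (PiLp.continuous_toLp 2 _).comp ?_
  refine continuous_pi fun i => ?_
  fin_cases i <;> simp <;> fun_prop

lemma uniformCircle_eq : uniformCircle = Measure.map stepVec angLaw := rfl

instance : IsProbabilityMeasure uniformCircle := by
  rw [uniformCircle_eq]; exact Measure.isProbabilityMeasure_map stepVec_meas.aemeasurable

lemma stepVec_periodic (θ : ℝ) : stepVec (θ + 2*π) = stepVec θ := by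
  simp [stepVec]

lemma map_rot_uniform (φ : ℝ) : uniformCircle.map (rot φ) = uniformCircle := by
  rw [uniformCircle_eq, Measure.map_map (rot_meas φ) stepVec_meas]
  apply Measure.ext_of_lintegral
  intro f hf
  rw [lintegral_map hf ((rot_meas φ).comp stepVec_meas), lintegral_map hf stepVec_meas]
  simp only [Function.comp, rot_stepVec]
  exact angLaw_shift (fun θ => f (stepVec θ)) (fun θ => by simp only [stepVec_periodic]) φ

/-- law of one step -/
noncomputable def stepLaw (μ : Measure ℝ) : Measure E2 :=
  Measure.map (fun p : ℝ × E2 => p.1 • p.2) (μ.prod uniformCircle)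

instance (μ : Measure ℝ) [IsProbabilityMeasure μ] : IsProbabilityMeasure (stepLaw μ) :=
  Measure.isProbabilityMeasure_map (by fun_prop)

lemma map_rot_stepLaw (μ : Measure ℝ) [IsProbabilityMeasure μ] (φ : ℝ) :
    (stepLaw μ).map (rot φ) = stepLaw μ := by
  have hr := rot_meas φ
  rw [stepLaw, Measure.map_map hr (by fun_prop)]
  have : (rot φ ∘ fun p : ℝ × E2 => p.1 • p.2)
      = (fun p : ℝ × E2 => p.1 • p.2) ∘ (Prod.map id (rot φ)) := by
    ext1 p; simp [rot_smul]
  rw [this, ← Measure.map_map (by fun_prop) (by fun_prop),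
    ← Measure.map_prod_map _ _ (by fun_prop) (by fun_prop), Measure.map_id, map_rot_uniform]

/-- law of the position after n steps -/
noncomputable def posLaw (μ : Measure ℝ) : ℕ → Measure E2
  | 0 => Measure.dirac 0
  | n+1 => Measure.conv (stepLaw μ) (posLaw μ n)

instance posLaw_prob (μ : Measure ℝ) [IsProbabilityMeasure μ] (n : ℕ) :
    IsProbabilityMeasure (posLaw μ n) := by
  induction n with
  | zero => unfold posLaw; infer_instance
  | succ n ih => unfold posLaw; infer_instance

lemma posLaw_add (μ : Measure ℝ) [IsProbabilityMeasure μ] (m n : ℕ) :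
    posLaw μ (m + n) = Measure.conv (posLaw μ m) (posLaw μ n) := by
  induction m with
  | zero => rw [zero_add, posLaw, Measure.dirac_zero_conv]
  | succ m ih =>
    rw [show m + 1 + n = (m + n) + 1 by ring, posLaw, ih, posLaw, Measure.conv_assoc]

lemma map_rot_posLaw (μ : Measure ℝ) [IsProbabilityMeasure μ] (n : ℕ) (φ : ℝ) :
    (posLaw μ n).map (rot φ) = posLaw μ n := by
  induction n with
  | zero => rw [posLaw, Measure.map_dirac' (rot_meas φ), map_zero]
  | succ n ih => rw [posLaw, Measure.map_conv_addMonoidHom _ (rot_meas φ), ih, map_rot_stepLaw]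

lemma posLaw_pi (μ : Measure ℝ) [IsProbabilityMeasure μ] (n : ℕ) :
    Measure.map (fun w : Fin n → E2 => ∑ i, w i) (Measure.pi fun _ => stepLaw μ) = posLaw μ n := by
  induction n with
  | zero => 
    simp [posLaw]
  | succ n ih =>
    have h := measurePreserving_piFinSuccAbove (fun _ : Fin (n+1) => stepLaw μ) 0
    rw [posLaw, ← ih]
    have e : (fun w : Fin (n+1) → E2 => ∑ i, w i) = (fun q : E2 × (Fin n → E2) =>
        q.1 + ∑ i, q.2 i) ∘ (MeasurableEquiv.piFinSuccAbove (fun _ : Fin (n+1) => E2) 0) := by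
      ext1 w
      simp [Fin.sum_univ_succ, Fin.tail]
    rw [e, ← Measure.map_map (by fun_prop) (by fun_prop), h.map_eq, Measure.conv]
    have hid : (stepLaw μ).prod (Measure.map (fun w : Fin n → E2 => ∑ i, w i)
        (Measure.pi fun _ => stepLaw μ)) = (Measure.map id (stepLaw μ)).prod
        (Measure.map (fun w : Fin n → E2 => ∑ i, w i) (Measure.pi fun _ => stepLaw μ)) := by
      rw [Measure.map_id]
    rw [hid, Measure.map_prod_map _ _ (by fun_prop) (by fun_prop),
      Measure.map_map (by fun_prop) (by fun_prop)]
    rfl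

lemma walkDist_eq (μ : Measure ℝ) [IsProbabilityMeasure μ] (n : ℕ) :
    walkDist μ n = (posLaw μ n).map (fun x => ‖x‖) := by
  rw [walkDist, ← posLaw_pi, Measure.map_map (by fun_prop) (by fun_prop)]
  have h := measurePreserving_arrowProdEquivProdArrow ℝ E2 (Fin n) (fun _ => μ)
    (fun _ => uniformCircle)
  rw [← h.map_eq, Measure.map_map (by fun_prop) (by fun_prop)]
  have h2 := measurePreserving_pi (fun _ : Fin n => μ.prod uniformCircle)
    (fun _ : Fin n => stepLaw μ) (f := fun _ p => p.1 • p.2)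
    (fun _ => ⟨by fun_prop, rfl⟩)
  rw [← h2.map_eq, Measure.map_map (by fun_prop) (by fun_prop)]
  rfl

lemma norm_sq_E2 (x : E2) : ‖x‖^2 = x 0 ^2 + x 1 ^2 := by
  rw [EuclideanSpace.norm_eq, sq_sqrt (by positivity)]; simp

lemma exists_polar (x : E2) : ∃ α, x 0 = ‖x‖ * cos α ∧ x 1 = ‖x‖ * sin α := by
  have hn : ‖(⟨x 0, x 1⟩ : ℂ)‖ = ‖x‖ := by
    rw [Complex.norm_eq_sqrt_sq_add_sq, ← norm_sq_E2, sqrt_sq (norm_nonneg _)]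
  refine ⟨Complex.arg ⟨x 0, x 1⟩, ?_, ?_⟩
  · rw [← hn, Complex.norm_mul_cos_arg]
  · rw [← hn, Complex.norm_mul_sin_arg]

/-- third side -/
noncomputable def side (a b θ : ℝ) : ℝ := √(a^2 + b^2 + 2*a*b*cos θ)

lemma norm_add_rot (x y : E2) : ∃ δ, ∀ φ, ‖x + rot φ y‖ = side ‖x‖ ‖y‖ (φ + δ) := by
  obtain ⟨α, a0, a1⟩ := exists_polar x
  obtain ⟨β, b0, b1⟩ := exists_polar y
  refine ⟨β - α, fun φ => ?_⟩
  rw [side, ← sqrt_sq (norm_nonneg (x + rot φ y)), norm_sq_E2]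
  congr 1
  have e : φ + (β - α) = (φ + β) - α := by ring
  rw [e, cos_sub, cos_add, sin_add]
  simp only [rot_apply, PiLp.add_apply]
  simp
  rw [a0, a1, b0, b1]
  have h1 := sin_sq_add_cos_sq α
  have h2 := sin_sq_add_cos_sq β
  have h3 := sin_sq_add_cos_sq φ
  generalize cos α = ca at *
  generalize sin α = sa at *
  generalize cos β = cb at *
  generalize sin β = sb at *
  generalize cos φ = cp at *
  generalize sin φ = sp at *
  generalize ‖x‖ = a
  generalize ‖y‖ = b
  linear_combination a^2 * h1 + b^2 * h2 + b^2 * (sb^2+cb^2) * h3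

set_option maxHeartbeats 1000000 in
lemma conv_norm (μ : Measure ℝ) [IsProbabilityMeasure μ] (m n : ℕ) (S : Set ℝ)
    (hS : MeasurableSet S) :
    walkDist μ (m + n) S = ∫⁻ a, ∫⁻ b, angLaw {θ | side a b θ ∈ S} ∂walkDist μ n ∂walkDist μ m := by
  have hm : Measurable (fun q : (ℝ × ℝ) × ℝ => side q.1.1 q.1.2 q.2) := by
    unfold side; fun_prop
  have hms : MeasurableSet {q : (ℝ × ℝ) × ℝ | side q.1.1 q.1.2 q.2 ∈ S} := hm hS
  have hg : Measurable (fun p : ℝ × ℝ => angLaw {θ | side p.1 p.2 θ ∈ S}) :=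
    measurable_measure_prodMk_left hms
  have key : ∀ x y : E2, ∫⁻ φ, S.indicator 1 ‖x + rot φ y‖ ∂angLaw
      = angLaw {θ | side ‖x‖ ‖y‖ θ ∈ S} := by
    intro x y
    obtain ⟨δ, hδ⟩ := norm_add_rot x y
    simp only [hδ]
    rw [angLaw_shift (fun θ => S.indicator (1 : ℝ → ℝ≥0∞) (side ‖x‖ ‖y‖ θ))
      (fun θ => by simp [side])]
    have hms2 : MeasurableSet {θ | side ‖x‖ ‖y‖ θ ∈ S} := by
      have : Measurable (side ‖x‖ ‖y‖) := by unfold side; fun_prop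
      exact this hS
    rw [← lintegral_indicator_one hms2]
    rfl
  have hind : Measurable (S.indicator (1 : ℝ → ℝ≥0∞)) := measurable_one.indicator hS
  have hr2 : ∀ x : E2, Measurable (fun q : ℝ × E2 => S.indicator (1 : ℝ → ℝ≥0∞) ‖x + rot q.1 q.2‖) := by
    intro x
    have h0 := rot_meas2
    exact hind.comp (h0.const_add x).norm
  rw [walkDist_eq μ (m+n), ← lintegral_indicator_one hS, lintegral_map hind (by fun_prop),
    posLaw_add, Measure.lintegral_conv (by fun_prop)]
  have step : ∀ x : E2, ∫⁻ y, S.indicator 1 ‖x + y‖ ∂posLaw μ n =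
      ∫⁻ y, angLaw {θ | side ‖x‖ ‖y‖ θ ∈ S} ∂posLaw μ n := by
    intro x
    have h1 : ∀ φ, ∫⁻ y, S.indicator (1 : ℝ → ℝ≥0∞) ‖x + y‖ ∂posLaw μ n =
        ∫⁻ y, S.indicator 1 ‖x + rot φ y‖ ∂posLaw μ n := by
      intro φ
      conv_lhs => rw [← map_rot_posLaw μ n φ]
      rw [lintegral_map (by fun_prop) (rot_meas φ)]
    calc _ = ∫⁻ φ, ∫⁻ y, S.indicator (1 : ℝ → ℝ≥0∞) ‖x + y‖ ∂posLaw μ n ∂angLaw := by simp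
      _ = ∫⁻ φ, ∫⁻ y, S.indicator 1 ‖x + rot φ y‖ ∂posLaw μ n ∂angLaw := by simp only [← h1]
      _ = ∫⁻ y, ∫⁻ φ, S.indicator 1 ‖x + rot φ y‖ ∂angLaw ∂posLaw μ n := by
        rw [lintegral_lintegral_swap]
        exact (hr2 x).aemeasurable
      _ = _ := by simp only [key]
  simp only [step]
  rw [walkDist_eq μ n, walkDist_eq μ m]
  have hg2 : ∀ a : ℝ, Measurable (fun b : ℝ => angLaw {θ | side a b θ ∈ S}) := fun a =>
    hg.comp (measurable_const.prodMk measurable_id)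
  have hg1 : Measurable (fun a : ℝ => ∫⁻ b, angLaw {θ | side a b θ ∈ S}
      ∂(Measure.map (fun x : E2 => ‖x‖) (posLaw μ n))) := by
    have : SFinite (Measure.map (fun x : E2 => ‖x‖) (posLaw μ n)) := inferInstance
    exact hg.lintegral_prod_right'
  rw [lintegral_map hg1 measurable_norm]
  refine lintegral_congr fun x => ?_
  rw [lintegral_map (hg2 _) measurable_norm]

instance wd_prob (μ : Measure ℝ) [IsProbabilityMeasure μ] (n : ℕ) :
    IsProbabilityMeasure (walkDist μ n) := by
  rw [walkDist_eq]; exact Measure.isProbabilityMeasure_map (by fun_prop)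

lemma side_eq_null {a b : ℝ} (ha : 0 < a) (hb : 0 < b) (c : ℝ) :
    angLaw {θ | side a b θ ∈ ({c} : Set ℝ)} = 0 := by
  refine measure_mono_null ?_ (angLaw_eq ((c^2 - a^2 - b^2) / (2*a*b)))
  intro θ hθ
  have h : side a b θ = c := hθ
  have h2 : a^2 + b^2 + 2*a*b*cos θ = c^2 := by
    rw [← h, side, sq_sqrt]
    nlinarith [neg_one_le_cos θ, mul_pos ha hb, sq_nonneg (a-b)]
  change cos θ = _
  rw [eq_div_iff (by positivity)]
  linarith

lemma side_lt {a b c : ℝ} (ha : 0 < a) (hb : 0 < b) (hc : 0 < c) :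
    angLaw {θ | side b c θ ∈ Set.Iio a} =
      ENNReal.ofReal (arccos ((b^2+c^2-a^2)/(2*b*c)) / π) := by
  rw [show (b^2+c^2-a^2)/(2*b*c) = -((a^2-b^2-c^2)/(2*b*c)) by ring, ← angLaw_lt]
  congr 1
  ext θ
  change √_ < a ↔ cos θ < _
  rw [sqrt_lt' ha, lt_div_iff₀ (by positivity)]
  constructor <;> intro h <;> linarith

lemma wd_one_pos (μ : Measure ℝ) [IsProbabilityMeasure μ] (hμ : ∀ᵐ x ∂μ, 0 < x) :
    ∀ᵐ a ∂walkDist μ 1, 0 < a := by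
  rw [walkDist_eq, show posLaw μ 1 = stepLaw μ by simp [posLaw], stepLaw, uniformCircle_eq]
  rw [ae_map_iff (by fun_prop) measurableSet_Ioi, ae_map_iff (by fun_prop)
    (measurableSet_lt (by fun_prop) (by fun_prop))]
  have h1 : ∀ᵐ p ∂μ.prod (Measure.map stepVec angLaw), 0 < p.1 :=
    Measure.quasiMeasurePreserving_fst.ae hμ
  have hn : ∀ᵐ u ∂Measure.map stepVec angLaw, u ≠ 0 := by
    rw [ae_map_iff (p := fun u : E2 => u ≠ 0) stepVec_meas.aemeasurable
      (measurableSet_singleton (0 : E2)).compl]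
    refine Filter.Eventually.of_forall fun θ h => ?_
    have h2 := norm_sq_E2 (stepVec θ)
    have e0 : ‖stepVec θ‖ = 0 := by rw [h, norm_zero]
    rw [e0] at h2
    have := sin_sq_add_cos_sq θ
    simp [stepVec] at h2
  have h2 : ∀ᵐ p ∂μ.prod (Measure.map stepVec angLaw), p.2 ≠ 0 := by
    have : SFinite (Measure.map stepVec angLaw) := inferInstance
    exact Measure.quasiMeasurePreserving_snd.ae hn
  filter_upwards [h1, h2] with p hp1 hp2
  exact norm_pos_iff.2 (smul_ne_zero hp1.ne' hp2)

lemma wd_nonneg (μ : Measure ℝ) [IsProbabilityMeasure μ] (n : ℕ) :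
    ∀ᵐ a ∂walkDist μ n, 0 ≤ a := by
  rw [walkDist_eq, ae_map_iff (by fun_prop) measurableSet_Ici]
  exact Filter.Eventually.of_forall fun x => norm_nonneg x

lemma wd_step (μ : Measure ℝ) [IsProbabilityMeasure μ] (m n : ℕ)
    (hm : ∀ᵐ a ∂walkDist μ m, 0 < a) (hn : ∀ᵐ a ∂walkDist μ n, 0 < a) (c : ℝ) :
    walkDist μ (m + n) {c} = 0 := by
  rw [conv_norm _ _ _ _ (measurableSet_singleton c)]
  have : ∀ᵐ a ∂walkDist μ m, ∫⁻ b, angLaw {θ | side a b θ ∈ ({c} : Set ℝ)} ∂walkDist μ n = 0 := by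
    filter_upwards [hm] with a ha
    rw [lintegral_congr_ae (g := fun _ => 0), lintegral_zero]
    filter_upwards [hn] with b hb
    exact side_eq_null ha hb c
  rw [lintegral_congr_ae this, lintegral_zero]

lemma wd_pos (μ : Measure ℝ) [IsProbabilityMeasure μ] (hμ : ∀ᵐ x ∂μ, 0 < x) (n : ℕ) :
    ∀ᵐ a ∂walkDist μ (n+1), 0 < a := by
  induction n with
  | zero => exact wd_one_pos μ hμ
  | succ n ih =>
    have h := wd_step μ (n+1) 1 ih (wd_one_pos μ hμ) 0
    have h' : ∀ᵐ a ∂walkDist μ (n+1+1), a ≠ 0 := by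
      rw [ae_iff]; simpa using h
    filter_upwards [h', wd_nonneg μ (n+1+1)] with a h1 h2
    exact lt_of_le_of_ne h2 h1.symm

lemma wd_atom (μ : Measure ℝ) [IsProbabilityMeasure μ] (hμ : ∀ᵐ x ∂μ, 0 < x) (n : ℕ)
    (hn : 2 ≤ n) (c : ℝ) : walkDist μ n {c} = 0 := by
  obtain ⟨k, rfl⟩ := Nat.exists_eq_add_of_le' hn
  exact wd_step μ (k+1) 1 (wd_pos μ hμ k) (wd_one_pos μ hμ) c

lemma prod_diag {α β : Measure ℝ} [IsProbabilityMeasure α] [IsProbabilityMeasure β]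
    (h : ∀ c, β {c} = 0) : (α.prod β) {q : ℝ × ℝ | q.1 = q.2} = 0 := by
  rw [Measure.prod_apply (measurableSet_eq_fun (by fun_prop) (by fun_prop))]
  have : ∀ x : ℝ, (Prod.mk x ⁻¹' {q : ℝ × ℝ | q.1 = q.2}) = {x} := by
    intro x; ext y; simp [eq_comm]
  simp [this, h]

lemma prod_lt_add {α β : Measure ℝ} [IsProbabilityMeasure α] [IsProbabilityMeasure β]
    (h : (α.prod β) {q : ℝ × ℝ | q.1 = q.2} = 0) :
    (α.prod β) {q : ℝ × ℝ | q.2 < q.1} + (β.prod α) {q : ℝ × ℝ | q.2 < q.1} = 1 := by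
  have hlt : MeasurableSet {q : ℝ × ℝ | q.2 < q.1} :=
    measurableSet_lt (by fun_prop) (by fun_prop)
  have hlt' : MeasurableSet {q : ℝ × ℝ | q.1 < q.2} :=
    measurableSet_lt (by fun_prop) (by fun_prop)
  have e : (β.prod α) {q : ℝ × ℝ | q.2 < q.1} = (α.prod β) {q : ℝ × ℝ | q.1 < q.2} := by
    rw [← Measure.prod_swap, Measure.map_apply measurable_swap hlt]; rfl
  rw [e, ← measure_union _ hlt', ← measure_univ (μ := α.prod β)]
  · apply measure_congr
    have h' : ∀ᵐ q ∂α.prod β, q.1 ≠ q.2 := by rw [ae_iff]; simpa using h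
    filter_upwards [h'] with q hq
    apply propext
    change (q.2 < q.1 ∨ q.1 < q.2) ↔ True
    simpa using hq.lt_or_gt.symm
  · rw [Set.disjoint_left]
    intro q h1 h2
    have h1 : q.2 < q.1 := h1
    have h2 : q.1 < q.2 := h2
    exact lt_asymm h1 h2

lemma compl_rel (μ : Measure ℝ) [IsProbabilityMeasure μ] (hμ : ∀ᵐ x ∂μ, 0 < x) (m n : ℕ)
    (h : 2 < m + n) :
    ((walkDist μ m).prod (walkDist μ n)) {q : ℝ × ℝ | q.2 < q.1} +
    ((walkDist μ n).prod (walkDist μ m)) {q : ℝ × ℝ | q.2 < q.1} = 1 := by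
  rcases le_or_gt 2 n with hn | hn
  · exact prod_lt_add (prod_diag (wd_atom μ hμ n hn))
  · rw [add_comm]
    exact prod_lt_add (prod_diag (wd_atom μ hμ m (by omega)))

/-- angle of a triangle, normalised -/
noncomputable def tri (a b c : ℝ) : ℝ≥0∞ :=
  ENNReal.ofReal (arccos ((b^2+c^2-a^2)/(2*b*c)) / π)

lemma tri_meas : Measurable (fun q : ℝ × ℝ × ℝ => tri q.1 q.2.1 q.2.2) := by
  unfold tri
  have := Real.continuous_arccos.measurable
  fun_prop

lemma tri_sum {a b c : ℝ} (ha : 0 < a) (hb : 0 < b) (hc : 0 < c) :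
    tri a b c + tri b c a + tri c a b = 1 := by
  have hp := Real.pi_pos
  have h1 := arccos_nonneg ((b^2+c^2-a^2)/(2*b*c))
  have h2 := arccos_nonneg ((c^2+a^2-b^2)/(2*c*a))
  have h3 := arccos_nonneg ((a^2+b^2-c^2)/(2*a*b))
  rw [tri, tri, tri, ← ENNReal.ofReal_add (by positivity) (by positivity),
    ← ENNReal.ofReal_add (by positivity) (by positivity), ← add_div, ← add_div,
    aux_arccos_sum ha hb hc, div_self hp.ne', ENNReal.ofReal_one]

lemma prob_tri (μ : Measure ℝ) [IsProbabilityMeasure μ] (hμ : ∀ᵐ x ∂μ, 0 < x) (i j k : ℕ)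
    (hi : 0 < i) (hj : 0 < j) (hk : 0 < k) :
    ((walkDist μ i).prod (walkDist μ (j + k))) {q : ℝ × ℝ | q.2 < q.1} =
      ∫⁻ a, ∫⁻ b, ∫⁻ c, tri a b c ∂walkDist μ k ∂walkDist μ j ∂walkDist μ i := by
  obtain ⟨i, rfl⟩ := Nat.exists_eq_add_of_le' hi
  obtain ⟨j, rfl⟩ := Nat.exists_eq_add_of_le' hj
  obtain ⟨k, rfl⟩ := Nat.exists_eq_add_of_le' hk
  rw [Measure.prod_apply (measurableSet_lt (by fun_prop) (by fun_prop))]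
  apply lintegral_congr_ae
  filter_upwards [wd_pos μ hμ i] with a ha
  change walkDist μ _ (Set.Iio a) = _
  rw [conv_norm _ _ _ _ measurableSet_Iio]
  apply lintegral_congr_ae
  filter_upwards [wd_pos μ hμ j] with b hb
  apply lintegral_congr_ae
  filter_upwards [wd_pos μ hμ k] with c hc
  exact side_lt ha hb hc

lemma rot_integral (α β γ : Measure ℝ) [IsProbabilityMeasure α] [IsProbabilityMeasure β]
    [IsProbabilityMeasure γ] (f : ℝ → ℝ → ℝ → ℝ≥0∞)
    (hf : Measurable (fun q : ℝ × ℝ × ℝ => f q.1 q.2.1 q.2.2)) :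
    ∫⁻ b, ∫⁻ c, ∫⁻ a, f b c a ∂α ∂γ ∂β = ∫⁻ a, ∫⁻ b, ∫⁻ c, f b c a ∂γ ∂β ∂α := by
  have h1 : ∀ b, ∫⁻ c, ∫⁻ a, f b c a ∂α ∂γ = ∫⁻ a, ∫⁻ c, f b c a ∂γ ∂α := by
    intro b
    apply lintegral_lintegral_swap
    exact (hf.comp (measurable_const.prodMk measurable_id)).aemeasurable
  simp only [h1]
  apply lintegral_lintegral_swap
  apply Measurable.aemeasurable
  have : Measurable (fun q : (ℝ × ℝ) × ℝ => f q.1.1 q.2 q.1.2) :=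
    hf.comp ((measurable_fst.comp measurable_fst).prodMk
      (measurable_snd.prodMk (measurable_snd.comp measurable_fst)))
  exact this.lintegral_prod_right'

lemma three_sum (μ : Measure ℝ) [IsProbabilityMeasure μ] (hμ : ∀ᵐ x ∂μ, 0 < x) (i j k : ℕ)
    (hi : 0 < i) (hj : 0 < j) (hk : 0 < k) :
    ((walkDist μ i).prod (walkDist μ (j + k))) {q : ℝ × ℝ | q.2 < q.1} +
    ((walkDist μ j).prod (walkDist μ (k + i))) {q : ℝ × ℝ | q.2 < q.1} +
    ((walkDist μ k).prod (walkDist μ (i + j))) {q : ℝ × ℝ | q.2 < q.1} = 1 := by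
  rw [prob_tri μ hμ i j k hi hj hk, prob_tri μ hμ j k i hj hk hi, prob_tri μ hμ k i j hk hi hj]
  have m1 := tri_meas
  have m2 : Measurable (fun q : ℝ × ℝ × ℝ => tri q.2.1 q.2.2 q.1) := 
    by
    unfold tri
    have := Real.continuous_arccos.measurable
    fun_prop
  have m3 : Measurable (fun q : ℝ × ℝ × ℝ => tri q.2.2 q.1 q.2.1) := 
    by
    unfold tri
    have := Real.continuous_arccos.measurable
    fun_prop
  rw [rot_integral (walkDist μ i) (walkDist μ j) (walkDist μ k) tri m1]
  rw [← rot_integral (walkDist μ k) (walkDist μ i) (walkDist μ j) (fun a b c => tri c a b) m3]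
  have add3 : ∀ f g : ℝ → ℝ → ℝ → ℝ≥0∞, 
      Measurable (fun q : ℝ × ℝ × ℝ => f q.1 q.2.1 q.2.2) → 
      (∫⁻ a, ∫⁻ b, ∫⁻ c, f a b c ∂walkDist μ k ∂walkDist μ j ∂walkDist μ i) +
      (∫⁻ a, ∫⁻ b, ∫⁻ c, g a b c ∂walkDist μ k ∂walkDist μ j ∂walkDist μ i) =
      ∫⁻ a, ∫⁻ b, ∫⁻ c, (f a b c + g a b c) ∂walkDist μ k ∂walkDist μ j ∂walkDist μ i := by
    intro f g hf
    have f2 : Measurable (fun q : ℝ × ℝ => ∫⁻ c, f q.1 q.2 c ∂walkDist μ k) := by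
      have : Measurable (fun q : (ℝ × ℝ) × ℝ => f q.1.1 q.1.2 q.2) :=
        hf.comp (by fun_prop : Measurable (fun q : (ℝ × ℝ) × ℝ => (q.1.1, q.1.2, q.2)))
      exact this.lintegral_prod_right'
    have f1 : Measurable (fun a : ℝ => ∫⁻ b, ∫⁻ c, f a b c ∂walkDist μ k ∂walkDist μ j) :=
      f2.lintegral_prod_right'
    rw [← lintegral_add_left f1]
    refine lintegral_congr fun a => ?_
    have f3 : Measurable (fun b : ℝ => ∫⁻ c, f a b c ∂walkDist μ k) :=
      f2.comp (measurable_const.prodMk measurable_id)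
    rw [← lintegral_add_left f3]
    refine lintegral_congr fun b => ?_
    rw [← lintegral_add_left]
    · exact hf.comp (by fun_prop : Measurable (fun c : ℝ => (a, b, c)))
  rw [add3 tri (fun a b c => tri b c a) m1,
    add3 (fun a b c => tri a b c + tri b c a) (fun a b c => tri c a b) (m1.add m2)]
  obtain ⟨i, rfl⟩ := Nat.exists_eq_add_of_le' hi
  obtain ⟨j, rfl⟩ := Nat.exists_eq_add_of_le' hj
  obtain ⟨k, rfl⟩ := Nat.exists_eq_add_of_le' hk
  have h : ∀ᵐ a ∂walkDist μ (i+1), ∫⁻ b, ∫⁻ c, (tri a b c + tri b c a + tri c a b)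
      ∂walkDist μ (k+1) ∂walkDist μ (j+1) = 1 := by
    filter_upwards [wd_pos μ hμ i] with a ha
    have h : ∀ᵐ b ∂walkDist μ (j+1), ∫⁻ c, (tri a b c + tri b c a + tri c a b)
      ∂walkDist μ (k+1) = 1 := by
      filter_upwards [wd_pos μ hμ j] with b hb
      have h : ∀ᵐ c ∂walkDist μ (k+1), tri a b c + tri b c a + tri c a b = 1 := by
        filter_upwards [wd_pos μ hμ k] with c hc
        exact tri_sum ha hb hc
      rw [lintegral_congr_ae h]; simp
    rw [lintegral_congr_ae h]; simp
  rw [lintegral_congr_ae h]; simp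

end Aux

theorem stmt_6 {Ω : Type*} [MeasurableSpace Ω] (P : Measure Ω) [IsProbabilityMeasure P]
    (X : Ω → ℝ) (hX : Measurable X) (hXpos : ∀ ω, 0 < X ω)
    (s : ℕ) (hs : 2 < s) (p : ℕ → ℝ≥0∞)
    (hp : ∀ i ≤ s, p i =
      ((walkDist (Measure.map X P) i).prod (walkDist (Measure.map X P) (s - i)))
        {q : ℝ × ℝ | q.2 < q.1})
    (i j : ℕ) (hi : 0 < i) (hj : 0 < j) (hij : i + j ≤ s) :
    p i + p j = p (i + j) := by
  have hprob : IsProbabilityMeasure (Measure.map X P) :=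
    Measure.isProbabilityMeasure_map hX.aemeasurable
  have hμ : ∀ᵐ x ∂Measure.map X P, 0 < x := by
    rw [ae_map_iff hX.aemeasurable measurableSet_Ioi]
    exact Filter.Eventually.of_forall hXpos
  generalize Measure.map X P = μ at *
  obtain ⟨k, rfl⟩ := Nat.exists_eq_add_of_le hij
  rw [hp i (by omega), hp j (by omega), hp (i + j) (by omega)]
  rw [show i + j + k - i = j + k by omega, show i + j + k - j = k + i by omega,
    show i + j + k - (i + j) = k by omega]
  have hc := compl_rel μ hμ (i + j) k hs
  rcases Nat.eq_zero_or_pos k with rfl | hk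
  · have h1 := compl_rel μ hμ i j hs
    have h0 : ((walkDist μ 0).prod (walkDist μ (i + j))) {q : ℝ × ℝ | q.2 < q.1} = 0 := by
      have e0 : walkDist μ 0 = Measure.dirac 0 := by
        rw [walkDist_eq, posLaw, Measure.map_dirac' measurable_norm, norm_zero]
      rw [Measure.prod_apply (measurableSet_lt (by fun_prop) (by fun_prop)), e0,
        lintegral_dirac]
      have := wd_nonneg μ (i + j)
      rw [ae_iff] at this
      simpa using this
    rw [h0, add_zero] at hc
    rw [hc, zero_add, add_zero]
    exact h1
  · have h3 := three_sum μ hμ i j k hi hj hk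
    rw [← hc] at h3
    exact (ENNReal.add_left_inj (measure_ne_top _ _)).1 h3
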